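/- arXiv:0803.3571 — 2 statements merged into one kernel-verified Lean document; each statement's English description precedes it below -/
import Mathlib

section
/- For every λ ≥ 0, the integral over the unit sphere S² of |1 - λ·ŷ₃| / |e₃ - λ·ŷ|³ dŷ is bounded by a constant independent of λ; i.e., sup_{λ ≥ 0} ∫_{S²} |1 - λ ŷ₃| / |e₃ - λ ŷ|³ dσ(ŷ) < ∞. -/
open MeasureTheory

noncomputable abbrev E3 : Type := EuclideanSpace ℝ (Fin 3)

noncomputable def e3 : E3 := EuclideanSpace.single 2 1

/-- The surface measure on the unit sphere `S² ⊂ ℝ³`. -/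
noncomputable def sphereMeasure : Measure (Metric.sphere (0 : E3) 1) :=
  (volume : Measure E3).toSphere

/-!
Write `d = |e₃ - λ y|` and `δ = |1 - λ|`, so that `d² = δ² + 2 λ (1 - y₃)`. If `λ ≤ 1/2`, then
`d ≥ 1/2` and the integrand is at most `12`. If `λ ≥ 1/2`, then `λ (1 - y₃) ≤ d² / 2` gives
`|1 - λ y₃| / d³ ≤ δ / d³ + 1 / d`, and `{d < s}` lies in the polar cap `{1 - y₃ < s²}`, whose
measure is at most `96 s²` (`sphereMeasure_cap_le`: the cone over it lies in a box with sides
`4 s, 4 s, 2`). By the layer-cake formula, `∫ 1 / d` is then at most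
`σ(S²) + ∫_{t > 1} 96 t⁻² dt`, while `∫ 1 / d³ ≤ 3 ∫_{0 < t ≤ 1/δ} 96 dt = 288 / δ` because
`1 / d ≤ 1 / δ`; the factor `δ` cancels the latter's blow-up as `λ → 1`.
-/

instance : IsFiniteMeasure sphereMeasure := by unfold sphereMeasure; infer_instance

lemma sphere_sq_sum (y : Metric.sphere (0 : E3) 1) :
    (y : E3) 0 ^ 2 + (y : E3) 1 ^ 2 + (y : E3) 2 ^ 2 = 1 := by
  have h := EuclideanSpace.real_norm_sq_eq (y : E3)
  rw [norm_eq_of_mem_sphere y, Fin.sum_univ_three] at h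
  linarith

lemma sphere_dist_sq (lam : ℝ) (y : Metric.sphere (0 : E3) 1) :
    ‖e3 - lam • (y : E3)‖ ^ 2 = (1 - lam) ^ 2 + 2 * lam * (1 - (y : E3) 2) := by
  have h := sphere_sq_sum y
  rw [EuclideanSpace.real_norm_sq_eq, Fin.sum_univ_three]
  simp [e3]
  linear_combination lam ^ 2 * h

lemma continuous_coord (i : Fin 3) :
    Continuous (fun y : Metric.sphere (0 : E3) 1 => (y : E3) i) := by
  fun_prop

open Pointwise in
/-- The measure of a polar cap is at most quadratic in its radius: the cone over the cap is
contained in the box `[-2s, 2s] × [-2s, 2s] × [-1, 1]`. -/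
lemma sphereMeasure_cap_le {s : ℝ} (hs : 0 < s) :
    sphereMeasure {y : Metric.sphere (0 : E3) 1 | 1 - (y : E3) 2 < s ^ 2} ≤
      ENNReal.ofReal (96 * s ^ 2) := by
  have hm : MeasurableSet {y : Metric.sphere (0 : E3) 1 | 1 - (y : E3) 2 < s ^ 2} :=
    (isOpen_lt (continuous_const.sub (continuous_coord 2)) continuous_const).measurableSet
  have hsub : Set.Ioo (0 : ℝ) 1 • (Subtype.val '' {y : Metric.sphere (0 : E3) 1 |
      1 - (y : E3) 2 < s ^ 2}) ⊆
      (WithLp.ofLp : E3 → (Fin 3 → ℝ)) ⁻¹'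
        Set.Icc ![-(2 * s), -(2 * s), -1] ![2 * s, 2 * s, 1] := by
    rintro _ ⟨r, ⟨hr0, hr1⟩, _, ⟨y, hy, rfl⟩, rfl⟩
    simp only [Set.mem_ofPred_eq] at hy
    have h := sphere_sq_sum y
    have h2 : |(y : E3) 2| ≤ 1 := by
      refine abs_le_of_sq_le_sq ?_ zero_le_one
      nlinarith [sq_nonneg ((y : E3) 0), sq_nonneg ((y : E3) 1)]
    have h0 : |(y : E3) 0| ≤ 2 * s := by
      refine abs_le_of_sq_le_sq ?_ (by positivity)
      nlinarith [sq_nonneg ((y : E3) 1), sq_nonneg (1 - (y : E3) 2)]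
    have h1 : |(y : E3) 1| ≤ 2 * s := by
      refine abs_le_of_sq_le_sq ?_ (by positivity)
      nlinarith [sq_nonneg ((y : E3) 0), sq_nonneg (1 - (y : E3) 2)]
    have key : ∀ a b : ℝ, |a| ≤ b → |r * a| ≤ b := fun a b hab => by
      rw [abs_mul, abs_of_pos hr0]
      nlinarith [abs_nonneg a]
    have k0 := abs_le.1 (key _ _ h0)
    have k1 := abs_le.1 (key _ _ h1)
    have k2 := abs_le.1 (key _ _ h2)
    simp only [Set.mem_preimage, Set.mem_Icc, Pi.le_def, Fin.forall_fin_succ]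
    simp
    exact ⟨⟨k0.1, k1.1, k2.1⟩, k0.2, k1.2, k2.2⟩
  rw [sphereMeasure, Measure.toSphere_apply' _ hm]
  calc _ ≤ (Module.finrank ℝ E3 : ENNReal) *
      volume (Set.Icc ![-(2 * s), -(2 * s), -1] ![2 * s, 2 * s, 1]) := by
        gcongr
        refine (measure_mono hsub).trans_eq ?_
        exact (PiLp.volume_preserving_ofLp (Fin 3)).measure_preimage
          measurableSet_Icc.nullMeasurableSet
    _ = _ := by
        rw [Real.volume_Icc_pi, Fin.prod_univ_three, finrank_euclideanSpace_fin]
        simp only [Matrix.cons_val_zero, Matrix.cons_val_one, Matrix.cons_val]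
        rw [← ENNReal.ofReal_mul (by linarith), ← ENNReal.ofReal_mul (by nlinarith),
          ← ENNReal.ofReal_natCast, ← ENNReal.ofReal_mul (by positivity)]
        congr 1
        push_cast
        ring

/-- Superlevel sets of `1 / d`, where `d = |e₃ - λ y|` and `λ ≥ 1/2`. -/
lemma sphereMeasure_superlevel_le {lam t : ℝ} (hl : 1 / 2 ≤ lam) (ht : 0 < t) :
    sphereMeasure {y : Metric.sphere (0 : E3) 1 | t < 1 / ‖e3 - lam • (y : E3)‖} ≤
      ENNReal.ofReal (96 * (1 / t) ^ 2) := by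
  refine (measure_mono fun y hy => ?_).trans (sphereMeasure_cap_le (s := 1 / t) (by positivity))
  simp only [Set.mem_ofPred_eq] at hy ⊢
  have hd0 : 0 < ‖e3 - lam • (y : E3)‖ := one_div_pos.1 (ht.trans hy)
  have hd : ‖e3 - lam • (y : E3)‖ < 1 / t := (lt_one_div ht hd0).1 hy
  have h1 := sphere_dist_sq lam y
  have h2 := pow_lt_pow_left₀ hd hd0.le two_ne_zero
  have h3 := sphere_sq_sum y
  have h4 : (y : E3) 2 ≤ 1 := by
    nlinarith [sq_nonneg ((y : E3) 0), sq_nonneg ((y : E3) 1)]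
  nlinarith [sq_nonneg (1 - lam)]

lemma measurable_inv_dist (lam : ℝ) :
    Measurable (fun y : Metric.sphere (0 : E3) 1 => 1 / ‖e3 - lam • (y : E3)‖) := by
  have : Measurable (fun y : Metric.sphere (0 : E3) 1 => ‖e3 - lam • (y : E3)‖) :=
    Continuous.measurable (by fun_prop)
  exact this.const_div 1

/-- A bound for `∫ 1 / d` that is uniform in `λ ≥ 1/2`. -/
noncomputable def invDistBound : ENNReal :=
  sphereMeasure Set.univ + ∫⁻ t in Set.Ioi (1 : ℝ), ENNReal.ofReal (96 * (1 / t) ^ 2)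

lemma invDistBound_ne_top : invDistBound ≠ ⊤ := by
  refine ENNReal.add_ne_top.2 ⟨measure_ne_top _ _, ?_⟩
  have h : IntegrableOn (fun t : ℝ => 96 * (1 / t) ^ 2) (Set.Ioi 1) := by
    have h2 : IntegrableOn (fun t : ℝ => 96 * t ^ (-2 : ℝ)) (Set.Ioi 1) :=
      (integrableOn_Ioi_rpow_of_lt (by norm_num) one_pos).const_mul 96
    refine h2.congr_fun (fun t ht => ?_) measurableSet_Ioi
    have ht0 : (0 : ℝ) < t := one_pos.trans ht
    simp only
    rw [Real.rpow_neg ht0.le, Real.rpow_ofNat, one_div, inv_pow]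
  exact h.lintegral_lt_top.ne

lemma lintegral_inv_dist_le {lam : ℝ} (hl : 1 / 2 ≤ lam) :
    ∫⁻ y : Metric.sphere (0 : E3) 1, ENNReal.ofReal (1 / ‖e3 - lam • (y : E3)‖) ∂sphereMeasure
      ≤ invDistBound := by
  rw [lintegral_eq_lintegral_meas_lt _ (ae_of_all _ fun y => by positivity)
    (measurable_inv_dist lam).aemeasurable,
    ← Set.Ioc_union_Ioi_eq_Ioi (zero_le_one' ℝ),
    lintegral_union measurableSet_Ioi (Set.Ioc_disjoint_Ioi le_rfl)]
  refine add_le_add ?_ ?_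
  · calc _ ≤ ∫⁻ _ in Set.Ioc (0 : ℝ) 1, sphereMeasure Set.univ :=
          lintegral_mono fun t => measure_mono (Set.subset_univ _)
      _ = _ := by simp
  · exact setLIntegral_mono' measurableSet_Ioi fun t ht =>
      sphereMeasure_superlevel_le hl (one_pos.trans ht)

lemma lintegral_inv_dist_cube_le {lam : ℝ} (hl : 1 / 2 ≤ lam) (h1 : lam ≠ 1) :
    ∫⁻ y : Metric.sphere (0 : E3) 1,
        ENNReal.ofReal ((1 / ‖e3 - lam • (y : E3)‖) ^ 3) ∂sphereMeasure
      ≤ ENNReal.ofReal (288 / |1 - lam|) := by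
  have hδ : 0 < |1 - lam| := abs_pos.2 (sub_ne_zero.2 h1.symm)
  have hrw : ∀ y : Metric.sphere (0 : E3) 1, (1 / ‖e3 - lam • (y : E3)‖) ^ 3 =
      (1 / ‖e3 - lam • (y : E3)‖) ^ (3 : ℝ) := fun y => by
    rw [Real.rpow_ofNat]
  simp_rw [hrw]
  rw [lintegral_rpow_eq_lintegral_meas_lt_mul _ (ae_of_all _ fun y => by positivity)
    (measurable_inv_dist lam).aemeasurable (by norm_num)]
  have hbd : ∫⁻ t in Set.Ioi (0 : ℝ),
      sphereMeasure {y : Metric.sphere (0 : E3) 1 | t < 1 / ‖e3 - lam • (y : E3)‖} *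
        ENNReal.ofReal (t ^ ((3 : ℝ) - 1)) ≤
      ∫⁻ t in Set.Ioi (0 : ℝ),
        (Set.Ioc 0 (1 / |1 - lam|)).indicator (fun _ => ENNReal.ofReal 96) t := by
    refine setLIntegral_mono' measurableSet_Ioi fun t ht => ?_
    have ht0 : (0 : ℝ) < t := ht
    by_cases htδ : t ≤ 1 / |1 - lam|
    · rw [Set.indicator_of_mem (Set.mem_Ioc.2 ⟨ht0, htδ⟩)]
      refine (mul_le_mul_left (sphereMeasure_superlevel_le hl ht0) _).trans_eq ?_
      rw [← ENNReal.ofReal_mul (by positivity)]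
      congr 1
      norm_num
      field_simp
    · -- `d ≥ δ` everywhere, so the superlevel set is empty.
      have hempty : {y : Metric.sphere (0 : E3) 1 | t < 1 / ‖e3 - lam • (y : E3)‖} = ∅ := by
        refine Set.eq_empty_of_forall_notMem fun y hy => htδ (le_of_lt (lt_of_lt_of_le hy ?_))
        refine one_div_le_one_div_of_le hδ (abs_le_of_sq_le_sq ?_ (norm_nonneg _))
        rw [sphere_dist_sq]
        have h3 := sphere_sq_sum y
        have h4 : (y : E3) 2 ≤ 1 := by
          nlinarith [sq_nonneg ((y : E3) 0), sq_nonneg ((y : E3) 1)]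
        nlinarith
      rw [hempty]
      simp
  refine (mul_le_mul_right hbd _).trans ?_
  rw [setLIntegral_indicator measurableSet_Ioc, setLIntegral_const,
    Set.inter_eq_left.2 Set.Ioc_subset_Ioi_self, Real.volume_Ioc,
    ← ENNReal.ofReal_mul (by norm_num), ← ENNReal.ofReal_mul (by norm_num)]
  refine ENNReal.ofReal_le_ofReal (le_of_eq ?_)
  ring

/-- The pointwise bound behind the case `λ ≥ 1/2`. It also holds at the singular point, where
division by zero makes both sides vanish. -/
lemma integrand_le {lam : ℝ} (hl : 0 ≤ lam) (y : Metric.sphere (0 : E3) 1) :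
    |1 - lam * (y : E3) 2| / ‖e3 - lam • (y : E3)‖ ^ 3 ≤
      |1 - lam| * (1 / ‖e3 - lam • (y : E3)‖) ^ 3 + 1 / ‖e3 - lam • (y : E3)‖ := by
  have hsq := sphere_dist_sq lam y
  have hs := sphere_sq_sum y
  have h4 : (y : E3) 2 ≤ 1 := by
    nlinarith [sq_nonneg ((y : E3) 0), sq_nonneg ((y : E3) 1)]
  rcases (norm_nonneg (e3 - lam • (y : E3))).eq_or_lt with h0 | hpos
  · rw [← h0]; simp
  · set d := ‖e3 - lam • (y : E3)‖
    have hnum : |1 - lam * (y : E3) 2| ≤ |1 - lam| + d ^ 2 := by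
      have : 0 ≤ lam * (1 - (y : E3) 2) := mul_nonneg hl (by linarith)
      calc |1 - lam * (y : E3) 2| = |(1 - lam) + lam * (1 - (y : E3) 2)| := by ring_nf
        _ ≤ |1 - lam| + |lam * (1 - (y : E3) 2)| := abs_add_le _ _
        _ ≤ |1 - lam| + d ^ 2 := by
          rw [abs_of_nonneg this]
          nlinarith [sq_nonneg (1 - lam)]
    calc _ ≤ (|1 - lam| + d ^ 2) / d ^ 3 := by gcongr
      _ = _ := by field_simp

lemma integral_le_of_half_le {lam : ℝ} (hl : 1 / 2 ≤ lam) :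
    (∫ y : Metric.sphere (0 : E3) 1,
      |1 - lam * (y : E3) 2| / ‖e3 - lam • (y : E3)‖ ^ 3 ∂sphereMeasure) ≤
      (ENNReal.ofReal 288 + invDistBound).toReal := by
  have hmeas : Measurable (fun y : Metric.sphere (0 : E3) 1 =>
      |1 - lam * (y : E3) 2| / ‖e3 - lam • (y : E3)‖ ^ 3) :=
    (Continuous.measurable (by fun_prop)).div (Continuous.measurable (by fun_prop))
  have hm3 : Measurable (fun y : Metric.sphere (0 : E3) 1 =>
      ENNReal.ofReal ((1 / ‖e3 - lam • (y : E3)‖) ^ 3)) :=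
    ((measurable_inv_dist lam).pow_const 3).ennreal_ofReal
  rw [integral_eq_lintegral_of_nonneg_ae (ae_of_all _ fun y => by positivity)
    hmeas.aestronglyMeasurable]
  refine ENNReal.toReal_mono
    (ENNReal.add_ne_top.2 ⟨ENNReal.ofReal_ne_top, invDistBound_ne_top⟩) ?_
  calc _ ≤ ∫⁻ y : Metric.sphere (0 : E3) 1,
        (ENNReal.ofReal |1 - lam| * ENNReal.ofReal ((1 / ‖e3 - lam • (y : E3)‖) ^ 3) +
          ENNReal.ofReal (1 / ‖e3 - lam • (y : E3)‖)) ∂sphereMeasure := by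
        refine lintegral_mono fun y => ?_
        rw [← ENNReal.ofReal_mul (abs_nonneg _),
          ← ENNReal.ofReal_add (by positivity) (by positivity)]
        exact ENNReal.ofReal_le_ofReal (integrand_le (by linarith) y)
    _ = ENNReal.ofReal |1 - lam| * (∫⁻ y : Metric.sphere (0 : E3) 1,
          ENNReal.ofReal ((1 / ‖e3 - lam • (y : E3)‖) ^ 3) ∂sphereMeasure) +
        ∫⁻ y : Metric.sphere (0 : E3) 1,
          ENNReal.ofReal (1 / ‖e3 - lam • (y : E3)‖) ∂sphereMeasure := by
        rw [lintegral_add_left (hm3.const_mul _), lintegral_const_mul _ hm3]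
    _ ≤ _ := by
        refine add_le_add ?_ (lintegral_inv_dist_le hl)
        by_cases h1 : lam = 1
        · -- Here `δ = 0`, and `0 * ⊤ = 0` in `ENNReal`.
          simp [h1]
        · have hδ : 0 < |1 - lam| := abs_pos.2 (sub_ne_zero.2 (Ne.symm h1))
          refine (mul_le_mul_right (lintegral_inv_dist_cube_le hl h1) _).trans_eq ?_
          rw [← ENNReal.ofReal_mul hδ.le]
          congr 1
          field_simp

lemma integral_le_of_le_half {lam : ℝ} (h0 : 0 ≤ lam) (hl : lam ≤ 1 / 2) :
    (∫ y : Metric.sphere (0 : E3) 1,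
      |1 - lam * (y : E3) 2| / ‖e3 - lam • (y : E3)‖ ^ 3 ∂sphereMeasure) ≤
      12 * sphereMeasure.real Set.univ := by
  refine (Real.le_norm_self _).trans (norm_integral_le_of_norm_le_const (ae_of_all _ fun y => ?_))
  have hs := sphere_sq_sum y
  obtain ⟨hy1, hy2⟩ := abs_le.1 <| abs_le_of_sq_le_sq (a := (y : E3) 2) (b := 1)
    (by nlinarith [sq_nonneg ((y : E3) 0), sq_nonneg ((y : E3) 1)]) zero_le_one
  have hd : 1 / 2 ≤ ‖e3 - lam • (y : E3)‖ := by
    refine le_of_sq_le_sq ?_ (norm_nonneg _)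
    rw [sphere_dist_sq]
    nlinarith
  have hnum : |1 - lam * (y : E3) 2| ≤ 3 / 2 := abs_le.2 ⟨by nlinarith, by nlinarith⟩
  rw [Real.norm_of_nonneg (by positivity)]
  calc _ ≤ (3 / 2) / ((1 / 2 : ℝ) ^ 3) := by gcongr
    _ = 12 := by norm_num

/-- `sup_{λ ≥ 0} ∫_{S²} |1 - λ ŷ₃| / |e₃ - λ ŷ|³ dσ(ŷ) < ∞`. -/
theorem sphere_integral_uniform_bound :
    ∃ C : ℝ, ∀ lam : ℝ, 0 ≤ lam →
      (∫ y : Metric.sphere (0 : E3) 1,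
          |1 - lam * (y : E3) 2| / ‖e3 - lam • (y : E3)‖ ^ 3 ∂sphereMeasure) ≤ C := by
  refine ⟨max (12 * sphereMeasure.real Set.univ) (ENNReal.ofReal 288 + invDistBound).toReal,
    fun lam h0 => ?_⟩
  rcases le_total lam (1 / 2) with hl | hl
  · exact (integral_le_of_le_half h0 hl).trans (le_max_left _ _)
  · exact (integral_le_of_half_le hl).trans (le_max_right _ _)
end

section
/- Let f : ℝ³ → ℂ be radially symmetric and integrable, with ∫ |f| = N. Then for every r > 0, r² ∫_{ℝ³} |f(y)| · |r - y₃| / |r e₃ - y|³ dy ≤ C N for a universal constant C, where the bound is uniform in r. -/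
/-!
In polar coordinates `y = s • ω` the integral becomes
`∫⁻ s, |f|(s) ∫⁻ ω, K_r(s ω) dσ(ω) s² ds`, so it suffices to bound the inner spherical integral
uniformly in `r` and `s`. Put `lam = s / r`, `ε = |1 - lam|`, `d = |ω - e₃|`, `D = |e₃ - lam ω|`.
Since `2 (1 - lam ω₃) = D² + 1 - lam²` and `D ≥ max ε d / 2`, the kernel is at most
`1 + 1 / d + 12 ε / (max ε d)³` (`kernel_bound`). The spherical cap `{d ≤ δ}` has measure at most
`24 δ²`, because the cone over it lies in a box with sides `2δ, 2δ, 2` (`cap_bound`). Cutting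
the sphere into dyadic shells around `e₃` then bounds the integrals of `1 / d` and
`ε / (max ε d)³` by geometric series that do not depend on `ε`.
-/

open MeasureTheory

/-- The unit sphere of `E3`. -/
abbrev S2 : Type := Metric.sphere (0 : E3) 1

/-- The (unnormalised) surface measure on the unit sphere. -/
noncomputable abbrev sig : Measure S2 := (volume : Measure E3).toSphere

lemma norm_sq_E3 (x : E3) : ‖x‖ ^ 2 = x 0 ^ 2 + x 1 ^ 2 + x 2 ^ 2 := by
  rw [EuclideanSpace.norm_sq_eq, Fin.sum_univ_three]
  simp

lemma abs_coord_le (x : E3) (i : Fin 3) : |x i| ≤ ‖x‖ := by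
  simpa using PiLp.norm_apply_le x i

open scoped Pointwise in
/-- A spherical cap of chordal radius `δ` has surface measure `O(δ²)`. -/
lemma cap_bound (δ : ℝ) (hδ : 0 ≤ δ) :
    sig {ω : S2 | ‖(ω : E3) - e3‖ ≤ δ} ≤ ENNReal.ofReal (24 * δ ^ 2) := by
  have hm : MeasurableSet {ω : S2 | ‖(ω : E3) - e3‖ ≤ δ} :=
    measurableSet_le (by fun_prop) (by fun_prop)
  rw [Measure.toSphere_apply' _ hm]
  set b : Fin 3 → ℝ := ![δ, δ, 1]
  have hsub : (Set.Ioo (0 : ℝ) 1 • ((Subtype.val : S2 → E3) '' {ω : S2 | ‖(ω : E3) - e3‖ ≤ δ}) : Set E3)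
      ⊆ (WithLp.ofLp : E3 → (Fin 3 → ℝ)) ⁻¹' (Set.Icc (-b) b) := by
    rintro _ ⟨s, ⟨hs0, hs1⟩, _, ⟨ω, hω, rfl⟩, rfl⟩
    have h0 := abs_coord_le ((ω : E3) - e3) 0
    have h1 := abs_coord_le ((ω : E3) - e3) 1
    have h2 := abs_coord_le (ω : E3) 2
    have hω' : ‖(ω : E3) - e3‖ ≤ δ := hω
    have hn : ‖(ω : E3)‖ = 1 := by simp
    have e0 : ((ω : E3) - e3) 0 = (ω : E3) 0 := by simp [e3]
    have e1 : ((ω : E3) - e3) 1 = (ω : E3) 1 := by simp [e3]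
    rw [e0] at h0
    rw [e1] at h1
    rw [hn] at h2
    have key : ∀ i, |s * (ω : E3) i| ≤ b i := by
      intro i
      rw [abs_mul, abs_of_pos hs0]
      have : |(ω : E3) i| ≤ b i := by
        fin_cases i
        · exact h0.trans hω'
        · exact h1.trans hω'
        · exact h2
      nlinarith [abs_nonneg ((ω : E3) i)]
    refine ⟨fun i => ?_, fun i => ?_⟩
    · have := (abs_le.1 (key i)).1
      simpa using this
    · have := (abs_le.1 (key i)).2
      simpa using this
  have hvol : volume ((WithLp.ofLp : E3 → (Fin 3 → ℝ)) ⁻¹' (Set.Icc (-b) b))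
      = ENNReal.ofReal (8 * δ ^ 2) := by
    rw [(PiLp.volume_preserving_ofLp (Fin 3)).measure_preimage measurableSet_Icc.nullMeasurableSet,
      Real.volume_Icc_pi, Fin.prod_univ_three]
    simp only [b, Pi.neg_apply, Matrix.cons_val_zero, Matrix.cons_val_one, Matrix.cons_val]
    rw [← ENNReal.ofReal_mul (by linarith), ← ENNReal.ofReal_mul (by nlinarith)]
    congr 1
    ring
  calc _ ≤ (Module.finrank ℝ E3 : ENNReal) * ENNReal.ofReal (8 * δ ^ 2) := by
        gcongr
        exact (measure_mono hsub).trans hvol.le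
    _ = ENNReal.ofReal (24 * δ ^ 2) := by
        rw [finrank_euclideanSpace_fin, ← ENNReal.ofReal_natCast, ← ENNReal.ofReal_mul (by simp)]
        congr 1
        push_cast
        ring

/-- If wherever `F` is positive there is a cap of some radius `δ n` containing the point at which
`F ≤ c n`, and `c n * δ n ^ 2` decays like `2⁻ⁿ`, then summing over all caps bounds the integral
of `F` by a geometric series. -/
lemma dyadic_bound (F : S2 → ℝ) (c δ : ℕ → ℝ) (hδ : ∀ n, 0 ≤ δ n) (hc : ∀ n, 0 ≤ c n)
    (hcd : ∀ n, c n * (24 * δ n ^ 2) ≤ 96 * (1 / 2) ^ n)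
    (hF : ∀ ω : S2, F ω ≤ 0 ∨ ∃ n, F ω ≤ c n ∧ ‖(ω : E3) - e3‖ ≤ δ n) :
    ∫⁻ ω, ENNReal.ofReal (F ω) ∂sig ≤ ENNReal.ofReal 192 := by
  have hm : ∀ n, MeasurableSet {ω : S2 | ‖(ω : E3) - e3‖ ≤ δ n} := fun n =>
    measurableSet_le (by fun_prop) (by fun_prop)
  calc ∫⁻ ω, ENNReal.ofReal (F ω) ∂sig
      ≤ ∫⁻ ω, ∑' n, Set.indicator {ω : S2 | ‖(ω : E3) - e3‖ ≤ δ n}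
          (fun _ => ENNReal.ofReal (c n)) ω ∂sig := by
        refine lintegral_mono fun ω => ?_
        rcases hF ω with h | ⟨n, h1, h2⟩
        · simp [ENNReal.ofReal_of_nonpos h]
        · refine le_trans ?_ (ENNReal.le_tsum n)
          rw [Set.indicator_of_mem (by exact h2)]
          exact ENNReal.ofReal_le_ofReal h1
    _ = ∑' n, ENNReal.ofReal (c n) * sig {ω : S2 | ‖(ω : E3) - e3‖ ≤ δ n} := by
        rw [lintegral_tsum fun n => (measurable_const.indicator (hm n)).aemeasurable]
        simp_rw [lintegral_indicator_const (hm _)]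
    _ ≤ ∑' n, ENNReal.ofReal (96 * (1 / 2) ^ n) := by
        refine ENNReal.tsum_le_tsum fun n => ?_
        grw [cap_bound (δ n) (hδ n), ← ENNReal.ofReal_mul (hc n), hcd n]
    _ = ENNReal.ofReal 192 := by
        rw [← ENNReal.ofReal_tsum_of_nonneg (fun n => by positivity)
          (summable_geometric_two.mul_left 96), tsum_mul_left, tsum_geometric_two]
        norm_num

lemma norm_sub_e3_le (ω : S2) : ‖(ω : E3) - e3‖ ≤ 2 := by
  have h := norm_sub_le (ω : E3) e3
  have h1 : ‖(ω : E3)‖ = 1 := by simp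
  have h2 : ‖e3‖ = 1 := by simp [e3]
  linarith

/-- On the shell `2 ^ (-n) < d ≤ 2 * 2 ^ (-n)` the integrand is at most `2 ^ n`. -/
lemma lintegral_inv_dist :
    ∫⁻ ω : S2, ENNReal.ofReal (1 / ‖(ω : E3) - e3‖) ∂sig ≤ ENNReal.ofReal 192 := by
  refine dyadic_bound _ (fun n => 2 ^ n) (fun n => 2 * (1 / 2) ^ n) (fun n => by positivity)
    (fun n => by positivity) (fun n => le_of_eq ?_) fun ω => ?_
  · rw [mul_pow, ← pow_mul, mul_comm n 2, pow_mul]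
    have : ((2 : ℝ) ^ n) * (1 / 2) ^ n = 1 := by rw [← mul_pow]; norm_num
    calc _ = 96 * ((2 : ℝ) ^ n * (((1 / 2) ^ 2) ^ n)) := by ring
      _ = _ := by rw [← mul_pow]; norm_num
  · have h2 := norm_sub_e3_le ω
    set d := ‖(ω : E3) - e3‖
    rcases (norm_nonneg ((ω : E3) - e3)).eq_or_lt with h | h
    · left
      change (0 : ℝ) = d at h
      simp [← h]
    · right
      change 0 < d at h
      obtain ⟨n, hn1, hn2⟩ := exists_nat_pow_near (x := 2 / d) (y := 2)
        ((one_le_div h).2 h2) (by norm_num)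
      refine ⟨n, ?_, ?_⟩
      · rw [pow_succ] at hn2
        have : 2 / d = 1 / d * 2 := by ring
        linarith
      · rw [le_div_iff₀ h] at hn1
        rw [one_div, inv_pow, ← div_eq_mul_inv, le_div_iff₀ (by positivity)]
        linarith

/-- A Poisson-kernel type integrand concentrated at scale `ε`: it is at most `ε⁻² 8⁻ⁿ` on the shell
`2 ^ n ≤ max ε d / ε < 2 ^ (n + 1)`, so the bound is uniform in `ε`. -/
lemma lintegral_poisson (ε : ℝ) (hε : 0 ≤ ε) :
    ∫⁻ ω : S2, ENNReal.ofReal (ε / (max ε ‖(ω : E3) - e3‖) ^ 3) ∂sig ≤ ENNReal.ofReal 192 := by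
  rcases hε.eq_or_lt with rfl | hε
  · simp
  refine dyadic_bound _ (fun n => (ε ^ 2)⁻¹ * (1 / 8) ^ n) (fun n => ε * (2 * 2 ^ n))
    (fun n => by positivity) (fun n => by positivity) (fun n => le_of_eq ?_) fun ω => .inr ?_
  · calc _ = 96 * ((ε ^ 2)⁻¹ * ε ^ 2) * ((1 / 8 : ℝ) ^ n * (2 ^ n * 2 ^ n)) := by ring
      _ = _ := by rw [inv_mul_cancel₀ (by positivity), ← mul_pow, ← mul_pow]; norm_num
  · set d := ‖(ω : E3) - e3‖
    obtain ⟨n, hn1, hn2⟩ := exists_nat_pow_near (x := max ε d / ε) (y := 2)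
      ((one_le_div hε).2 (le_max_left _ _)) (by norm_num)
    rw [le_div_iff₀ hε] at hn1
    rw [div_lt_iff₀ hε] at hn2
    refine ⟨n, ?_, ?_⟩
    · calc ε / (max ε d) ^ 3 ≤ ε / (2 ^ n * ε) ^ 3 := by gcongr
        _ = (ε ^ 2)⁻¹ * (1 / (2 ^ n) ^ 3) := by field_simp
        _ = _ := by
          rw [← pow_mul, mul_comm n 3, pow_mul, ← one_div_pow]
          norm_num
    · have := le_max_right ε d
      rw [pow_succ] at hn2
      linarith

/-- Pointwise kernel bound in terms of `lam = s / r`, the distance `D = |e₃ - lam ω|`, the chord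
`d = |ω - e₃|` and the height `t = ω₃ = 1 - d² / 2`. -/
lemma kernel_bound (lam D d t : ℝ) (hl : 0 ≤ lam) (hD : 0 ≤ D) (hd : 0 ≤ d) (hd2 : d ≤ 2)
    (ht : t = 1 - d ^ 2 / 2) (hDe : D ^ 2 = (1 - lam) ^ 2 + lam * d ^ 2) :
    |1 - lam * t| / D ^ 3 ≤ 1 + 1 / d + 12 * (|1 - lam| / (max |1 - lam| d) ^ 3) := by
  have hnn : 0 ≤ 12 * (|1 - lam| / (max |1 - lam| d) ^ 3) := by positivity
  have hnd : 0 ≤ 1 / d := by positivity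
  have hεD : |1 - lam| ≤ D := by
    refine abs_le_of_sq_le_sq ?_ hD
    nlinarith [mul_nonneg hl (sq_nonneg d)]
  rcases hd.eq_or_lt with rfl | hd0
  · -- Here `ω = e₃`, and both sides keep only `ε / ε ^ 3` (which is `0` in Lean if `ε = 0`).
    have hDE : D = |1 - lam| := by
      rw [← abs_of_nonneg hD]
      exact (sq_eq_sq_iff_abs_eq_abs _ _).1 (by linarith)
    have : t = 1 := by simpa using ht
    rw [this, hDE, mul_one, max_eq_left (abs_nonneg _)]
    have : 0 ≤ |1 - lam| / |1 - lam| ^ 3 := by positivity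
    linarith
  have hdsq : d ^ 2 ≤ 4 := by nlinarith
  have hdD : d ≤ 2 * D := by
    have : d ^ 2 ≤ (2 * D) ^ 2 := by nlinarith [mul_nonneg hl (sq_nonneg d)]
    exact le_of_sq_le_sq this (by positivity)
  have hD0 : 0 < D := by linarith
  rcases le_or_gt lam 2 with h2 | h2
  · have hnum : |1 - lam * t| ≤ (D ^ 2 + 3 * |1 - lam|) / 2 := by
      have e : 1 - lam * t = (D ^ 2 + (1 - lam) * (1 + lam)) / 2 := by rw [hDe, ht]; ring
      have h3 : |(1 - lam) * (1 + lam)| ≤ 3 * |1 - lam| := by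
        rw [abs_mul, abs_of_nonneg (by linarith : 0 ≤ 1 + lam)]
        nlinarith [abs_nonneg (1 - lam)]
      rw [e, abs_div, abs_two]
      have := abs_add_le (D ^ 2) ((1 - lam) * (1 + lam))
      rw [abs_of_nonneg (sq_nonneg D)] at this
      linarith
    set m := max |1 - lam| d
    have hm : 0 < m := lt_max_of_lt_right hd0
    have hmD : m / 2 ≤ D := by
      have : m ≤ 2 * D := max_le (by linarith) hdD
      linarith
    calc |1 - lam * t| / D ^ 3 ≤ ((D ^ 2 + 3 * |1 - lam|) / 2) / D ^ 3 := by gcongr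
      _ = 1 / (2 * D) + 3 / 2 * (|1 - lam| / D ^ 3) := by field_simp
      _ ≤ 1 / d + 3 / 2 * (|1 - lam| / (m / 2) ^ 3) := by gcongr
      _ = 1 / d + 12 * (|1 - lam| / m ^ 3) := by field_simp; ring
      _ ≤ _ := by linarith
  · have h1 : |1 - lam * t| ≤ D := by
      refine abs_le_of_sq_le_sq ?_ hD
      have e : D ^ 2 - (1 - lam * t) ^ 2 = lam ^ 2 * (d ^ 2 * (4 - d ^ 2)) / 4 := by
        rw [hDe, ht]; ring
      have : 0 ≤ lam ^ 2 * (d ^ 2 * (4 - d ^ 2)) :=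
        mul_nonneg (sq_nonneg _) (mul_nonneg (sq_nonneg _) (by linarith))
      linarith
    have h3 : 1 ≤ D := by
      have := neg_le_abs (1 - lam)
      linarith
    have : |1 - lam * t| / D ^ 3 ≤ 1 := by
      rw [div_le_one (by positivity)]
      exact h1.trans (le_self_pow₀ h3 (by norm_num))
    linarith

/-- The kernel `r² |r - y₃| / |r e₃ - y|³`, with value `0` at `y = r e₃`. -/
noncomputable def ker (r : ℝ) (y : E3) : ℝ := r ^ 2 * (|r - y 2| / ‖r • e3 - y‖ ^ 3)

lemma ker_le (r s : ℝ) (hr : 0 < r) (hs : 0 < s) (ω : S2) :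
    ker r (s • (ω : E3)) ≤ 1 + 1 / ‖(ω : E3) - e3‖ +
      12 * (|1 - s / r| / (max |1 - s / r| ‖(ω : E3) - e3‖) ^ 3) := by
  have hω : (ω : E3) 0 ^ 2 + (ω : E3) 1 ^ 2 + (ω : E3) 2 ^ 2 = 1 := by
    rw [← norm_sq_E3]; simp
  have hd : ‖(ω : E3) - e3‖ ^ 2 = 2 - 2 * (ω : E3) 2 := by
    rw [norm_sq_E3]
    simp [e3]
    linarith
  have hDD : ‖r • e3 - s • (ω : E3)‖ ^ 2 = r ^ 2 - 2 * r * s * (ω : E3) 2 + s ^ 2 := by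
    rw [norm_sq_E3]
    simp [e3]
    linear_combination s ^ 2 * hω
  have := kernel_bound (s / r) (‖r • e3 - s • (ω : E3)‖ / r) ‖(ω : E3) - e3‖ ((ω : E3) 2)
    (by positivity) (by positivity) (norm_nonneg _) (norm_sub_e3_le ω) (by rw [hd]; ring)
    (by rw [div_pow, hDD, hd]; field_simp; ring)
  refine le_trans (le_of_eq ?_) this
  have e : 1 - s / r * (ω : E3) 2 = (r - s * (ω : E3) 2) / r := by field_simp
  rw [e, abs_div, abs_of_pos hr, ker, div_pow]
  simp only [PiLp.smul_apply, smul_eq_mul]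
  rcases (norm_nonneg (r • e3 - s • (ω : E3))).eq_or_lt with h | h
  · simp [← h]
  · field_simp

/-- The uniform bound for the spherical means of the kernel. -/
lemma lintegral_ker_le (r s : ℝ) (hr : 0 < r) (hs : 0 < s) :
    ∫⁻ ω : S2, ENNReal.ofReal (ker r (s • (ω : E3))) ∂sig ≤
      sig Set.univ + ENNReal.ofReal 2496 := by
  calc _ ≤ ∫⁻ ω : S2, (1 + ENNReal.ofReal (1 / ‖(ω : E3) - e3‖) + ENNReal.ofReal 12 *
        ENNReal.ofReal (|1 - s / r| / (max |1 - s / r| ‖(ω : E3) - e3‖) ^ 3)) ∂sig := by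
        refine lintegral_mono fun ω => ?_
        refine (ENNReal.ofReal_le_ofReal (ker_le r s hr hs ω)).trans (le_of_eq ?_)
        rw [ENNReal.ofReal_add (by positivity) (by positivity),
          ENNReal.ofReal_add (by positivity) (by positivity), ENNReal.ofReal_one,
          ENNReal.ofReal_mul (by norm_num)]
    _ ≤ sig Set.univ + ENNReal.ofReal 192 + ENNReal.ofReal 12 * ENNReal.ofReal 192 := by
        rw [lintegral_add_right _ (by fun_prop), lintegral_add_right _ (by fun_prop),
          lintegral_const_mul _ (by fun_prop), lintegral_one]
        grw [lintegral_inv_dist, lintegral_poisson _ (abs_nonneg _)]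
    _ = _ := by
        rw [← ENNReal.ofReal_mul (by norm_num), add_assoc, ← ENNReal.ofReal_add] <;> norm_num

/-- The radial measure `s² ds` on `(0, ∞)`. -/
noncomputable abbrev nu : Measure (Set.Ioi (0 : ℝ)) := Measure.volumeIoiPow 2

lemma mp_polar : MeasurePreserving (homeomorphUnitSphereProd E3)
    ((volume : Measure E3).comap (↑)) (sig.prod nu) := by
  have := (volume : Measure E3).measurePreserving_homeomorphUnitSphereProd
  rwa [finrank_euclideanSpace_fin] at this

/-- Polar coordinates; no measurability of `G` is needed. -/
lemma lintegral_polar (G : E3 → ENNReal) :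
    ∫⁻ y, G y = ∫⁻ p : S2 × Set.Ioi (0 : ℝ), G ((p.2 : ℝ) • (p.1 : E3)) ∂(sig.prod nu) := by
  have h := mp_polar.lintegral_comp_emb (Homeomorph.measurableEmbedding _)
    (fun p : S2 × Set.Ioi (0 : ℝ) => G ((p.2 : ℝ) • (p.1 : E3)))
  rw [← h]
  have h0 : (volume : Measure E3).restrict {0}ᶜ = volume := restrict_compl_singleton 0
  conv_lhs => rw [← h0]
  rw [← lintegral_subtype_comap (measurableSet_singleton _).compl]
  refine lintegral_congr fun y => ?_
  have : (y : E3) ≠ 0 := y.2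
  simp [smul_smul, this]

/-- The radial profile of `|f|` is a.e. measurable: in polar coordinates `|f|` depends only on the
second factor of a product measure whose first factor is nonzero. -/
lemma aemeasurable_radial (f : E3 → ℂ) (hf : Integrable f)
    (hrad : ∀ x y : E3, ‖x‖ = ‖y‖ → ‖f x‖ = ‖f y‖) :
    AEMeasurable (fun s : Set.Ioi (0 : ℝ) => ENNReal.ofReal ‖f ((s : ℝ) • e3)‖) nu := by
  have h1 : AEStronglyMeasurable (fun y : ({0}ᶜ : Set E3) => ‖f y‖)
      ((volume : Measure E3).comap (↑)) := by
    have : AEStronglyMeasurable (fun y => ‖f y‖) ((volume : Measure E3).restrict {0}ᶜ) :=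
      hf.1.norm.restrict
    rw [← map_comap_subtype_coe (measurableSet_singleton (0 : E3)).compl] at this
    exact this.comp_measurable measurable_subtype_coe
  have h2 : AEStronglyMeasurable (fun p : S2 × Set.Ioi (0 : ℝ) => ‖f ((p.2 : ℝ) • e3)‖)
      (sig.prod nu) := by
    rw [← mp_polar.aestronglyMeasurable_comp_iff (Homeomorph.measurableEmbedding _)]
    refine h1.congr (.of_forall fun y => ?_)
    exact hrad _ _ (by simp [norm_smul, e3])
  have h3 : AEStronglyMeasurable (fun s : Set.Ioi (0 : ℝ) => ‖f ((s : ℝ) • e3)‖) nu :=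
    (AEStronglyMeasurable.comp_snd_iff (Measure.toSphere_ne_zero _)).1 h2
  exact h3.aemeasurable.ennreal_ofReal

lemma measurable_ker (r : ℝ) : Measurable (ker r) := by
  unfold ker
  fun_prop

/-- uniform bound `r² ∫ |f(y)| |r - y₃| / |r e₃ - y|³ dy ≤ C N` for radial `|f|`. -/
theorem radial_kernel_uniform_bound :
    ∃ C : ℝ, ∀ (f : E3 → ℂ) (N : ℝ),
      Integrable f →
      (∀ x y : E3, ‖x‖ = ‖y‖ → ‖f x‖ = ‖f y‖) →
      N = (∫ y, ‖f y‖) →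
      ∀ r : ℝ, 0 < r →
        r ^ 2 * (∫ y : E3, ‖f y‖ * |r - y 2| / ‖r • e3 - y‖ ^ 3) ≤ C * N := by
  set A : ENNReal := sig Set.univ + ENNReal.ofReal 2496 with hA
  have hSfin : sig Set.univ ≠ ⊤ := measure_ne_top _ _
  have hS0 : sig Set.univ ≠ 0 := by
    rw [Ne, Measure.measure_univ_eq_zero]
    exact Measure.toSphere_ne_zero _
  have hAfin : A ≠ ⊤ := ENNReal.add_ne_top.2 ⟨hSfin, ENNReal.ofReal_ne_top⟩
  have hCfin : A / sig Set.univ ≠ ⊤ := ENNReal.div_ne_top hAfin hS0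
  refine ⟨(A / sig Set.univ).toReal, ?_⟩
  intro f N hf hrad hN r hr
  set g : Set.Ioi (0 : ℝ) → ENNReal := fun s => ENNReal.ofReal ‖f ((s : ℝ) • e3)‖
  have hg : AEMeasurable g nu := aemeasurable_radial f hf hrad
  have hfg : ∀ p : S2 × Set.Ioi (0 : ℝ),
      ENNReal.ofReal ‖f ((p.2 : ℝ) • (p.1 : E3))‖ = g p.2 := fun p =>
    congrArg _ (hrad _ _ (by simp [norm_smul, e3]))
  have hNl : ENNReal.ofReal N = sig Set.univ * ∫⁻ s, g s ∂nu := by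
    rw [hN, ofReal_integral_eq_lintegral_ofReal hf.norm (.of_forall fun _ => norm_nonneg _),
      lintegral_polar]
    simp_rw [hfg]
    have := lintegral_prod_mul (μ := sig) (ν := nu) (f := fun _ => 1) aemeasurable_const hg
    simpa using this
  have hmain : ∫⁻ y, ENNReal.ofReal (‖f y‖ * ker r y) ≤ A * ∫⁻ s, g s ∂nu := by
    rw [lintegral_polar]
    simp_rw [ENNReal.ofReal_mul (norm_nonneg _), hfg]
    have hk : Measurable fun p : S2 × Set.Ioi (0 : ℝ) =>
        ENNReal.ofReal (ker r ((p.2 : ℝ) • (p.1 : E3))) :=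
      ((measurable_ker r).comp (by fun_prop)).ennreal_ofReal
    have hgk : AEMeasurable (fun p : S2 × Set.Ioi (0 : ℝ) =>
        g p.2 * ENNReal.ofReal (ker r ((p.2 : ℝ) • (p.1 : E3)))) (sig.prod nu) :=
      hg.comp_snd.mul hk.aemeasurable
    rw [lintegral_prod_symm _ hgk, ← lintegral_const_mul' _ _ hAfin]
    refine lintegral_mono fun s => ?_
    dsimp only
    rw [lintegral_const_mul' _ _ ENNReal.ofReal_ne_top, mul_comm]
    gcongr
    exact lintegral_ker_le r s hr s.2
  have hint : r ^ 2 * (∫ y : E3, ‖f y‖ * |r - y 2| / ‖r • e3 - y‖ ^ 3)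
      = ∫ y, ‖f y‖ * ker r y := by
    rw [← integral_const_mul]
    refine integral_congr_ae (.of_forall fun y => ?_)
    simp only [ker]
    ring
  have hN0 : 0 ≤ N := by rw [hN]; positivity
  rw [hint, integral_eq_lintegral_of_nonneg_ae
    (.of_forall fun y => mul_nonneg (norm_nonneg _) (by unfold ker; positivity))
    (hf.1.norm.mul (measurable_ker r).aestronglyMeasurable)]
  have hfinal : ∫⁻ y, ENNReal.ofReal (‖f y‖ * ker r y) ≤
      A / sig Set.univ * ENNReal.ofReal N := by
    refine hmain.trans (le_of_eq ?_)
    rw [hNl, ← mul_assoc, ENNReal.div_mul_cancel hS0 hSfin]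
  have := ENNReal.toReal_mono (ENNReal.mul_ne_top hCfin ENNReal.ofReal_ne_top) hfinal
  rwa [ENNReal.toReal_mul, ENNReal.toReal_ofReal hN0] at this
end
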